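/- If q is a positive integer with q ≡ 1 (mod 4) and q ≠ 1, then A_q(q+3, q+1) ≤ q²(q+1)/2 − q = (q−1)q(q+2)/2; that is, every code C ⊆ (Fin q)^{q+3} with minimum Hamming distance at least q+1 has cardinality at most (q−1)q(q+2)/2. -/

import Mathlib

open Finset

namespace QPlusThree

/-- number of agreeing coordinates -/
def agr {n q : ℕ} (u w : Fin n → Fin q) : ℤ := ∑ k, if u k = w k then 1 else 0

/-- block of the code -/
def blk {n q : ℕ} (C : Finset (Fin n → Fin q)) (k : Fin n) (s : Fin q) :
    Finset (Fin n → Fin q) := C.filter (fun u => u k = s)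

/-- indicator of exactly one agreement -/
def one {n q : ℕ} (u w : Fin n → Fin q) : ℤ := if agr u w = 1 then 1 else 0

lemma agr_comm {n q : ℕ} (u w : Fin n → Fin q) : agr u w = agr w u := by
  unfold agr
  refine sum_congr rfl fun k _ => ?_
  simp only [eq_comm]

lemma agr_nonneg {n q : ℕ} (u w : Fin n → Fin q) : 0 ≤ agr u w := by
  unfold agr
  refine sum_nonneg fun k _ => ?_
  split_ifs <;> norm_num

lemma agr_self {n q : ℕ} (u : Fin n → Fin q) : agr u u = n := by
  simp [agr]

lemma agr_add_dist {n q : ℕ} (u w : Fin n → Fin q) : agr u w + hammingDist u w = n := by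
  unfold agr hammingDist
  rw [Finset.card_filter]
  push_cast
  rw [← sum_add_distrib]
  have : ∀ k, ((if u k = w k then (1:ℤ) else 0) + if u k ≠ w k then 1 else 0) = 1 := by
    intro k; by_cases h : u k = w k <;> simp [h]
  rw [sum_congr rfl fun k _ => this k]
  simp

lemma agr_pos {n q : ℕ} (u w : Fin n → Fin q) (k : Fin n) (h : u k = w k) : 1 ≤ agr u w := by
  unfold agr
  have := single_le_sum (f := fun k => if u k = w k then (1:ℤ) else 0) (s := univ)
    (fun i _ => by split_ifs <;> norm_num) (mem_univ k)
  simpa [h] using this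

lemma sum_blk {n q : ℕ} (C : Finset (Fin n → Fin q)) (k : Fin n)
    (f : (Fin n → Fin q) → (Fin n → Fin q) → ℤ) :
    ∑ s, ∑ u ∈ blk C k s, ∑ w ∈ blk C k s, f u w
      = ∑ u ∈ C, ∑ w ∈ C, if u k = w k then f u w else 0 := by
  unfold blk
  simp only [sum_filter]
  rw [sum_comm]
  refine sum_congr rfl fun u _ => ?_
  rw [Finset.sum_ite_eq]
  simp [eq_comm]

lemma sum_card_blk {n q : ℕ} (C : Finset (Fin n → Fin q)) (k : Fin n) :
    ∑ s, ((blk C k s).card : ℤ) = C.card := by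
  have := Finset.card_eq_sum_card_fiberwise (f := fun u : Fin n → Fin q => u k) (s := C)
    (t := univ) (fun _ _ => by simp)
  rw [this]; push_cast; rfl

lemma sum_agr {n q : ℕ} (D : Finset (Fin n → Fin q)) :
    ∑ u ∈ D, ∑ w ∈ D, agr u w = ∑ k, ∑ s, ((blk D k s).card : ℤ) ^ 2 := by
  have h : ∀ k, ∑ s, ((blk D k s).card : ℤ) ^ 2
      = ∑ u ∈ D, ∑ w ∈ D, if u k = w k then (1:ℤ) else 0 := by
    intro k
    rw [← sum_blk D k (fun _ _ => 1)]
    simp [sq]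
  simp only [h, agr]
  symm
  rw [sum_comm]
  refine sum_congr rfl fun u _ => ?_
  rw [sum_comm]

lemma sum_one {n q : ℕ} (C : Finset (Fin n → Fin q)) :
    ∑ u ∈ C, ∑ w ∈ C, one u w = ∑ k, ∑ s, ∑ u ∈ blk C k s, ∑ w ∈ blk C k s, one u w := by
  simp only [sum_blk]
  symm
  rw [sum_comm]
  refine sum_congr rfl fun u _ => ?_
  rw [sum_comm]
  refine sum_congr rfl fun w _ => ?_
  symm
  have h1 : one u w = agr u w * one u w := by
    unfold one; split_ifs with h <;> simp [h]
  rw [h1]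
  nth_rw 1 [agr]
  rw [sum_mul]
  refine sum_congr rfl fun k _ => ?_
  split_ifs with h
  · rw [← h1]; ring
  · ring

section key
variable {q : ℕ} (C : Finset (Fin (q + 3) → Fin q))

/-- number of ordered pairs in a block with a single agreement -/
def Z (j : Fin (q + 3)) (a : Fin q) : ℤ := ∑ u ∈ blk C j a, ∑ w ∈ blk C j a, one u w

/-- sum of squares -/
def S (j : Fin (q + 3)) (a : Fin q) : ℤ :=
  ∑ k ∈ univ.erase j, ∑ s, ((blk (blk C j a) k s).card : ℤ) ^ 2

lemma agr_le (hC : ∀ u ∈ C, ∀ v ∈ C, u ≠ v → q + 1 ≤ hammingDist u v)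
    {u w : Fin (q + 3) → Fin q} (hu : u ∈ C) (hw : w ∈ C) (h : u ≠ w) : agr u w ≤ 2 := by
  have h1 := agr_add_dist u w
  have h2 := hC u hu w hw h
  push_cast at h1
  have : (q : ℤ) + 1 ≤ hammingDist u w := by exact_mod_cast h2
  linarith

lemma key (hC : ∀ u ∈ C, ∀ v ∈ C, u ≠ v → q + 1 ≤ hammingDist u v)
    (j : Fin (q + 3)) (a : Fin q) :
    S C j a + Z C j a ≤ ((blk C j a).card : ℤ) ^ 2 + (q + 1) * (blk C j a).card := by
  have h1 := sum_agr (blk C j a)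
  rw [← add_sum_erase univ _ (mem_univ j)] at h1
  have h2 : ∑ s, ((blk (blk C j a) j s).card : ℤ) ^ 2 = ((blk C j a).card : ℤ) ^ 2 := by
    rw [sum_eq_single a]
    · congr 3
      unfold blk
      rw [filter_filter]; simp
    · intro s _ hs
      have : blk (blk C j a) j s = ∅ := by
        unfold blk
        rw [filter_filter, filter_eq_empty_iff]
        rintro u _ ⟨h, h'⟩
        exact hs (h'.symm.trans h)
      simp [this]
    · simp
  have h3 : ∀ u ∈ blk C j a, ∀ w ∈ blk C j a,
      agr u w + one u w ≤ 2 + if u = w then (q + 1 : ℤ) else 0 := by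
    intro u hu w hw
    simp only [blk, mem_filter] at hu hw
    have hp := agr_pos u w j (hu.2.trans hw.2.symm)
    by_cases h : u = w
    · subst h
      have := agr_self u
      push_cast at this
      unfold one
      rw [this, if_neg (by linarith [Int.natCast_nonneg q])]
      simp; linarith
    · have := agr_le C hC hu.1 hw.1 h
      unfold one
      rw [if_neg h]
      split_ifs <;> omega
  have h4 := sum_le_sum fun u hu => sum_le_sum fun w hw => h3 u hu w hw
  simp only [sum_add_distrib] at h4
  rw [h1, h2] at h4
  have h5 : ∑ u ∈ blk C j a, ∑ w ∈ blk C j a, (if u = w then (q + 1 : ℤ) else 0)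
      = (q + 1) * (blk C j a).card := by
    rw [sum_congr rfl (g := fun _ => (q + 1 : ℤ))]
    · simp; ring
    · intro u hu
      rw [sum_ite_eq, if_pos hu]
  rw [h5] at h4
  simp only [sum_const, nsmul_eq_mul] at h4
  unfold S Z
  nlinarith [h4]

lemma quad (j : Fin (q + 3)) (a : Fin q) (x y z : ℤ) :
    ∑ k ∈ univ.erase j, ∑ s, (x * ((blk (blk C j a) k s).card : ℤ) ^ 2
      + y * ((blk (blk C j a) k s).card : ℤ) + z)
      = x * S C j a + y * ((q + 2) * (blk C j a).card) + z * ((q + 2) * q) := by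
  simp only [sum_add_distrib, ← mul_sum, sum_card_blk]
  have : ((univ.erase j).card : ℤ) = q + 2 := by
    rw [card_erase_of_mem (mem_univ j)]; simp
  simp only [sum_const, nsmul_eq_mul, this, card_univ, Fintype.card_fin, S]
  ring

lemma Z_nonneg (j : Fin (q + 3)) (a : Fin q) : 0 ≤ Z C j a := by
  unfold Z one
  refine sum_nonneg fun u _ => sum_nonneg fun w _ => ?_
  split_ifs <;> norm_num

lemma blk_le (hq : 0 < q) (hC : ∀ u ∈ C, ∀ v ∈ C, u ≠ v → q + 1 ≤ hammingDist u v)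
    (m : ℤ) (hm : (q : ℤ) = 2 * m - 1)
    (j : Fin (q + 3)) (a : Fin q) : ((blk C j a).card : ℤ) ≤ q * m := by
  have hk := key C hC j a
  have hZ := Z_nonneg C j a
  set M : ℤ := ((blk C j a).card : ℤ) with hM
  have h0 : 0 ≤ M := by positivity
  have hq' : (0:ℤ) < q := by exact_mod_cast hq
  have h1 : 0 ≤ ∑ k ∈ univ.erase j, ∑ s, ((q:ℤ)^2 * ((blk (blk C j a) k s).card : ℤ) ^ 2
      + (-2 * q * M) * ((blk (blk C j a) k s).card : ℤ) + M ^ 2) := by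
    refine sum_nonneg fun k _ => sum_nonneg fun s _ => ?_
    nlinarith [sq_nonneg ((q:ℤ) * ((blk (blk C j a) k s).card : ℤ) - M)]
  rw [quad, ← hM] at h1
  have h2 : 0 ≤ (q:ℤ) * (q * S C j a - (q + 2) * M ^ 2) := by nlinarith
  have h3 := nonneg_of_mul_nonneg_right h2 hq'
  have h4 : (q:ℤ) * S C j a ≤ q * (M ^ 2 + (q + 1) * M) :=
    mul_le_mul_of_nonneg_left (by linarith) hq'.le
  by_contra hlt
  push Not at hlt
  have hMpos : 0 < M := by nlinarith
  have h5 : 0 < M * (M - q * m) := mul_pos hMpos (by linarith)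
  have h6 : (q:ℤ) * (q + 1) = 2 * (q * m) := by rw [hm]; ring
  nlinarith

lemma Z_le (hC : ∀ u ∈ C, ∀ v ∈ C, u ≠ v → q + 1 ≤ hammingDist u v)
    (m : ℤ) (hm : (q : ℤ) = 2 * m - 1)
    (j : Fin (q + 3)) (a : Fin q) :
    Z C j a ≤ (q * m - (blk C j a).card) * (q * m - (blk C j a).card - 1) := by
  have hk := key C hC j a
  have h1 : 0 ≤ ∑ k ∈ univ.erase j, ∑ s, (1 * ((blk (blk C j a) k s).card : ℤ) ^ 2
      + (1 - 2 * m) * ((blk (blk C j a) k s).card : ℤ) + m * (m - 1)) := by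
    refine sum_nonneg fun k _ => sum_nonneg fun s _ => ?_
    generalize ((blk (blk C j a) k s).card : ℤ) = c
    have : 0 ≤ (c - m) * (c - m + 1) := by
      rcases le_or_gt m c with h | h
      · exact mul_nonneg (by linarith) (by linarith)
      · exact mul_nonneg_of_nonpos_of_nonpos (by linarith) (by linarith)
    linarith
  rw [quad] at h1
  generalize ((blk C j a).card : ℤ) = M at *
  generalize S C j a = s at *
  rw [hm] at *
  linarith

lemma count_eq (hC : ∀ u ∈ C, ∀ v ∈ C, u ≠ v → q + 1 ≤ hammingDist u v)
    (m : ℤ) (hm : (q : ℤ) = 2 * m - 1)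
    (j : Fin (q + 3)) (a : Fin q) (hfull : ((blk C j a).card : ℤ) = q * m)
    (k : Fin (q + 3)) (hk : k ≠ j) (s : Fin q) : ((blk (blk C j a) k s).card : ℤ) = m := by
  have hkey := key C hC j a
  have hZ := Z_nonneg C j a
  have h1 := quad C j a 1 (-2 * m) (m ^ 2)
  have h2 : ∀ k s, 0 ≤ (1 * ((blk (blk C j a) k s).card : ℤ) ^ 2
      + (-2 * m) * ((blk (blk C j a) k s).card : ℤ) + m ^ 2) := by
    intro k s
    nlinarith [sq_nonneg (((blk (blk C j a) k s).card : ℤ) - m)]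
  have h3 : ∑ k ∈ univ.erase j, ∑ s, (1 * ((blk (blk C j a) k s).card : ℤ) ^ 2
      + (-2 * m) * ((blk (blk C j a) k s).card : ℤ) + m ^ 2) = 0 := by
    refine le_antisymm ?_ (sum_nonneg fun k _ => sum_nonneg fun s _ => h2 k s)
    rw [h1, hfull]
    rw [hfull] at hkey
    generalize S C j a = s at *
    rw [hm] at *
    linarith
  rw [sum_eq_zero_iff_of_nonneg (fun k _ => sum_nonneg fun s _ => h2 k s)] at h3
  have h4 := h3 k (by simp [hk])
  rw [sum_eq_zero_iff_of_nonneg (fun s _ => h2 k s)] at h4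
  have h5 := h4 s (mem_univ s)
  have h6 : (((blk (blk C j a) k s).card : ℤ) - m) ^ 2 = 0 := by linarith
  have := pow_eq_zero_iff (two_ne_zero) |>.1 h6
  linarith

lemma exists_one (hC : ∀ u ∈ C, ∀ v ∈ C, u ≠ v → q + 1 ≤ hammingDist u v)
    (m : ℤ) (hm : (q : ℤ) = 2 * m - 1) (hodd : Odd m)
    (j : Fin (q + 3)) (a : Fin q) (hfull : ((blk C j a).card : ℤ) = q * m)
    (u : Fin (q + 3) → Fin q) (hu : u ∈ C) (hua : u j ≠ a) :
    1 ≤ ∑ w ∈ blk C j a, one u w := by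
  have hnn : ∀ w ∈ blk C j a, 0 ≤ one u w := by
    intro w _; unfold one; split_ifs <;> norm_num
  have hsum : ∑ w ∈ blk C j a, agr u w = (q + 2) * m := by
    unfold agr
    rw [sum_comm, ← add_sum_erase univ _ (mem_univ j)]
    have e1 : ∑ w ∈ blk C j a, (if u j = w j then (1:ℤ) else 0) = 0 := by
      refine sum_eq_zero fun w hw => ?_
      simp only [blk, mem_filter] at hw
      rw [if_neg]
      rw [hw.2]; exact hua
    rw [e1, zero_add]
    have e2 : ∀ k ∈ univ.erase j, ∑ w ∈ blk C j a, (if u k = w k then (1:ℤ) else 0) = m := by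
      intro k hk
      rw [← count_eq C hC m hm j a hfull k (by simpa using hk) (u k)]
      conv_rhs => rw [blk]
      rw [Finset.card_filter]
      push_cast
      simp only [eq_comm]
    rw [sum_congr rfl e2, sum_const, card_erase_of_mem (mem_univ j)]
    simp
  by_contra hlt
  have h0 : ∑ w ∈ blk C j a, one u w = 0 := by
    have := sum_nonneg hnn
    omega
  rw [sum_eq_zero_iff_of_nonneg hnn] at h0
  have hev : Even (∑ w ∈ blk C j a, agr u w) := by
    refine Finset.even_sum _ fun w hw => ?_
    have h1 := h0 w hw
    simp only [blk, mem_filter] at hw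
    have h2 := agr_le C hC hu hw.1 (by rintro rfl; exact hua hw.2)
    have h3 := agr_nonneg u w
    unfold one at h1
    have h4 : agr u w ≠ 1 := by
      intro h; simp [h] at h1
    have : agr u w = 0 ∨ agr u w = 2 := by omega
    rcases this with h | h <;> rw [h] <;> decide
  rw [hsum] at hev
  have : Odd (((q:ℤ) + 2) * m) := by
    refine Odd.mul ?_ hodd
    rw [hm]
    exact ⟨m, by ring⟩
  exact (Int.not_even_iff_odd.2 this) hev

lemma lower (hC : ∀ u ∈ C, ∀ v ∈ C, u ≠ v → q + 1 ≤ hammingDist u v)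
    (m : ℤ) (hm : (q : ℤ) = 2 * m - 1) (hodd : Odd m)
    (j : Fin (q + 3)) (a : Fin q) (hfull : ((blk C j a).card : ℤ) = q * m) :
    2 * ((C.card : ℤ) - q * m) ≤ ∑ u ∈ C, ∑ w ∈ C, one u w := by
  have hnn : ∀ u w : Fin (q + 3) → Fin q, 0 ≤ one u w := by
    intro u w; unfold one; split_ifs <;> norm_num
  set D := blk C j a with hD
  have hDC : D ⊆ C := filter_subset _ _
  have hcard : ((C \ D).card : ℤ) = C.card - q * m := by
    have := card_sdiff_add_card_eq_card hDC
    rw [← hfull]; omega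
  have h1 : ((C \ D).card : ℤ) ≤ ∑ u ∈ C \ D, ∑ w ∈ D, one u w := by
    have : ∑ u ∈ C \ D, (1:ℤ) ≤ ∑ u ∈ C \ D, ∑ w ∈ D, one u w := by
      refine sum_le_sum fun u hu => ?_
      rw [mem_sdiff] at hu
      refine exists_one C hC m hm hodd j a hfull u hu.1 fun h => hu.2 ?_
      simp [hD, blk, hu.1, h]
    simpa using this
  have h2 : ∑ u ∈ D, ∑ w ∈ C \ D, one u w = ∑ u ∈ C \ D, ∑ w ∈ D, one u w := by
    rw [sum_comm]
    refine sum_congr rfl fun u _ => sum_congr rfl fun w _ => ?_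
    unfold one; rw [agr_comm]
  have h3 : ∑ u ∈ C, ∑ w ∈ C, one u w
      = ∑ u ∈ C \ D, ∑ w ∈ C, one u w + ∑ u ∈ D, ∑ w ∈ C, one u w :=
    (sum_sdiff hDC).symm
  have h4 : ∑ u ∈ C \ D, ∑ w ∈ D, one u w ≤ ∑ u ∈ C \ D, ∑ w ∈ C, one u w :=
    sum_le_sum fun u _ => sum_le_sum_of_subset_of_nonneg hDC fun w _ _ => hnn u w
  have h5 : ∑ u ∈ D, ∑ w ∈ C \ D, one u w ≤ ∑ u ∈ D, ∑ w ∈ C, one u w :=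
    sum_le_sum fun u _ => sum_le_sum_of_subset_of_nonneg sdiff_subset fun w _ _ => hnn u w
  linarith

lemma upper (hq : 0 < q) (hC : ∀ u ∈ C, ∀ v ∈ C, u ≠ v → q + 1 ≤ hammingDist u v)
    (m : ℤ) (hm : (q : ℤ) = 2 * m - 1) :
    ∑ u ∈ C, ∑ w ∈ C, one u w
      ≤ (q + 3) * ((q * (q * m) - C.card) * (q * (q * m) - C.card - 1)) := by
  rw [sum_one]
  set T : ℤ := q * (q * m) - C.card with hT
  have : ∀ k ∈ (univ : Finset (Fin (q + 3))),
      ∑ s, ∑ u ∈ blk C k s, ∑ w ∈ blk C k s, one u w ≤ T * (T - 1) := by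
    intro k _
    have hsum : ∑ s, ((q:ℤ) * m - (blk C k s).card) = T := by
      rw [sum_sub_distrib, sum_card_blk]; simp [hT]
    have hnn : ∀ s ∈ (univ : Finset (Fin q)), 0 ≤ ((q:ℤ) * m - (blk C k s).card) :=
      fun s _ => sub_nonneg.2 (blk_le C hq hC m hm k s)
    calc ∑ s, ∑ u ∈ blk C k s, ∑ w ∈ blk C k s, one u w
        ≤ ∑ s, ((q:ℤ) * m - (blk C k s).card) * (T - 1) := by
          refine sum_le_sum fun s hs => (Z_le C hC m hm k s).trans ?_
          refine mul_le_mul_of_nonneg_left ?_ (hnn s hs)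
          have := single_le_sum hnn hs
          rw [hsum] at this
          linarith
      _ = T * (T - 1) := by rw [← sum_mul, hsum]
  have h := sum_le_sum this
  refine h.trans (le_of_eq ?_)
  simp

end key

end QPlusThree

open QPlusThree in
/-- If `q ≡ 1 (mod 4)` and `q ≠ 1`, then `A_q(q+3, q+1) ≤ (q-1)q(q+2)/2`:
every code `C ⊆ (Fin q)^(q+3)` with minimum Hamming distance at least `q+1`
has cardinality at most `(q-1)q(q+2)/2`. -/
theorem Aq_q_plus_three_bound (q : ℕ) (hq0 : 0 < q) (hq4 : q % 4 = 1) (hq1 : q ≠ 1)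
    (C : Finset (Fin (q + 3) → Fin q))
    (hC : ∀ u ∈ C, ∀ v ∈ C, u ≠ v → q + 1 ≤ hammingDist u v) :
    C.card ≤ (q - 1) * q * (q + 2) / 2 := by
  obtain ⟨r, hr⟩ : ∃ r : ℕ, q = 4 * r + 1 := ⟨q / 4, by omega⟩
  have hr1 : 1 ≤ r := by omega
  set m : ℤ := 2 * r + 1 with hmdef
  have hm : (q : ℤ) = 2 * m - 1 := by rw [hr, hmdef]; push_cast; ring
  have hodd : Odd m := ⟨r, rfl⟩
  rw [Nat.le_div_iff_mul_le two_pos]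
  by_contra hlt
  push Not at hlt
  have hlt' : (((q:ℤ) - 1) * q * (q + 2)) < C.card * 2 := by
    have : (((q - 1 : ℕ) : ℤ) * q * (q + 2)) < C.card * 2 := by exact_mod_cast hlt
    rwa [Nat.cast_sub (by omega), Nat.cast_one] at this
  set T : ℤ := q * (q * m) - C.card with hT
  have hTq : T < q := by
    rw [hm] at hlt' hT ⊢
    nlinarith
  have hsum : ∑ s, ((q:ℤ) * m - (blk C 0 s).card) = T := by
    rw [sum_sub_distrib, sum_card_blk]; simp [hT]
  have hnn : ∀ s ∈ (univ : Finset (Fin q)), 0 ≤ ((q:ℤ) * m - (blk C 0 s).card) :=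
    fun s _ => sub_nonneg.2 (blk_le C hq0 hC m hm 0 s)
  have hT0 : 0 ≤ T := hsum ▸ sum_nonneg hnn
  obtain ⟨a, ha⟩ : ∃ a, ((blk C 0 a).card : ℤ) = q * m := by
    by_contra hne
    push Not at hne
    have : ∑ s : Fin q, (1:ℤ) ≤ ∑ s, ((q:ℤ) * m - (blk C 0 s).card) := by
      refine sum_le_sum fun s hs => ?_
      have h1 := hnn s hs
      have h2 := hne s
      omega
    rw [hsum] at this
    simp at this
    omega
  have hlow := lower C hC m hm hodd 0 a ha
  have hup := upper C hq0 hC m hm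
  rw [← hT] at hup
  have hTT : T * (T - 1) ≤ (q - 1) * (q - 2) := by
    have : (0:ℤ) ≤ (q - 1 - T) * (q + T - 2) :=
      mul_nonneg (by linarith) (by omega)
    linarith
  have h1 : ((q:ℤ) + 3) * (T * (T - 1)) ≤ (q + 3) * ((q - 1) * (q - 2)) :=
    mul_le_mul_of_nonneg_left hTT (by positivity)
  have h2 : 2 * ((q:ℤ) * (q * m) - T - q * m) ≤ (q + 3) * ((q - 1) * (q - 2)) := by
    have : (C.card : ℤ) = q * (q * m) - T := by rw [hT]; ring
    rw [this] at hlow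
    linarith
  have h3 : (q:ℤ) * m * 2 = q * (q + 1) := by rw [hm]; ring
  have h4 : (4:ℤ) < q := by omega
  have h5 : 2 * ((q:ℤ) * (q * m) - T - q * m) ≥ (q - 1) * (q * (q + 1)) - 2 * (q - 1) := by
    rw [← h3]; nlinarith
  nlinarith
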